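/- Let f be a topologically transitive expansive homeomorphism with canonical coordinates of a compact metric space (M,d), where 3ξ is an expansivity constant and d is self-similar for f with expanding factor λ > 1 and constant ξ. Then f has homogeneous entropy: ent(W^u_ξ(x)) = ent(W^u_ξ(y)) and ent(W^s_ξ(x)) = ent(W^s_ξ(y)) for all x, y ∈ M. -/

import Mathlib

open Filter Topology

def Ws {M : Type*} [MetricSpace M] (f : Equiv.Perm M) (eps : ℝ) (x : M) : Set M :=
  {y | ∀ n : ℕ, dist ((f ^ n) x) ((f ^ n) y) ≤ eps}

def Wu {M : Type*} [MetricSpace M] (f : Equiv.Perm M) (eps : ℝ) (x : M) : Set M :=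
  {y | ∀ n : ℕ, dist ((f.symm ^ n) x) ((f.symm ^ n) y) ≤ eps}

/-- Diameter of a set with respect to an arbitrary "metric" `ρ`. -/
noncomputable def rdiam {M : Type*} (ρ : M → M → ℝ) (A : Set M) : ℝ :=
  sSup {r : ℝ | ∃ a ∈ A, ∃ b ∈ A, r = ρ a b}

/-- Minimal cardinality of a finite cover of `X` by sets of `ρ`-diameter `< ε`. -/
noncomputable def covN {M : Type*} (X : Set M) (ρ : M → M → ℝ) (ε : ℝ) : ℕ :=
  sInf {n : ℕ | ∃ U : Fin n → Set M, X ⊆ (⋃ i, U i) ∧ ∀ i, rdiam ρ (U i) < ε}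

/-- `dᶠₙ(x,y) = max_{|k| ≤ n} d(fᵏ x, fᵏ y)`. -/
noncomputable def dFn {M : Type*} [MetricSpace M] (f : Equiv.Perm M) (n : ℕ) (x y : M) : ℝ :=
  sSup {r : ℝ | ∃ k : ℤ, |k| ≤ (n : ℤ) ∧ r = dist ((f ^ k) x) ((f ^ k) y)}

section Aux

theorem aux_seq (u : ℕ → ℝ) (ξ lam : ℝ) (hlam : 1 < lam) (h0 : ∀ k, 0 ≤ u k)
    (h1 : ∀ k, u k ≤ ξ) (h2 : ∀ k, max (u k) (u (k + 2)) = lam * u (k + 1)) (k : ℕ) :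
    lam * u (k + 1) ≤ u k := by
  by_contra hcon
  push Not at hcon
  have key : ∀ j : ℕ, u (k + j) < lam * u (k + j + 1) ∧ lam ^ j * u (k + 1) ≤ u (k + j + 1) := by
    intro j
    induction j with
    | zero => simpa using hcon
    | succ j ih =>
      have h3 := h2 (k + j)
      have h4 : u (k + j + 2) = lam * u (k + j + 1) := by
        rcases max_choice (u (k + j)) (u (k + j + 2)) with h | h
        · rw [h] at h3; linarith [ih.1]
        · rw [h] at h3; exact h3
      have hpos : 0 < u (k + j + 1) := by
        have := ih.1
        have h5 := h0 (k + j)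
        by_contra hc
        have : u (k + j + 1) = 0 := le_antisymm (not_lt.mp hc) (h0 _)
        rw [this] at ih
        linarith [ih.1]
      refine ⟨?_, ?_⟩
      · show u (k + j + 1) < lam * u (k + j + 2)
        rw [h4]
        nlinarith [mul_pos (sub_pos.mpr hlam) hpos]
      · show lam ^ (j + 1) * u (k + 1) ≤ u (k + j + 2)
        rw [h4, pow_succ]
        nlinarith [ih.2]
  have hpos : 0 < u (k + 1) := by
    by_contra hc
    have : u (k + 1) = 0 := le_antisymm (not_lt.mp hc) (h0 _)
    rw [this] at hcon
    linarith [h0 k]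
  obtain ⟨j, hj⟩ := pow_unbounded_of_one_lt (ξ / u (k + 1)) hlam
  have h6 := (key j).2
  have h7 := h1 (k + j + 1)
  rw [div_lt_iff₀ hpos] at hj
  linarith

theorem aux_seq' (u : ℕ → ℝ) (ξ lam : ℝ) (hlam : 1 < lam) (h0 : ∀ k, 0 ≤ u k)
    (h1 : ∀ k, u k ≤ ξ) (h2 : ∀ k, max (u k) (u (k + 2)) = lam * u (k + 1)) (k : ℕ) :
    lam ^ k * u k ≤ u 0 := by
  induction k with
  | zero => simp
  | succ k ih =>
    have := aux_seq u ξ lam hlam h0 h1 h2 k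
    calc lam ^ (k + 1) * u (k + 1) = lam ^ k * (lam * u (k + 1)) := by ring
      _ ≤ lam ^ k * u k := by gcongr
      _ ≤ u 0 := ih

variable {M : Type*} [MetricSpace M]

/-- distance after `k` iterates -/
noncomputable def Dk (f : Equiv.Perm M) (k : ℤ) (a b : M) : ℝ :=
  dist ((f ^ k) a) ((f ^ k) b)

theorem Dk_nonneg (f : Equiv.Perm M) (k : ℤ) (a b : M) : 0 ≤ Dk f k a b := dist_nonneg

theorem Dk_comm (f : Equiv.Perm M) (k : ℤ) (a b : M) : Dk f k a b = Dk f k b a := dist_comm _ _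

theorem Dk_tri (f : Equiv.Perm M) (k : ℤ) (a b c : M) :
    Dk f k a c ≤ Dk f k a b + Dk f k b c := dist_triangle _ _ _

theorem Dk_shift (f : Equiv.Perm M) (k j : ℤ) (a b : M) :
    Dk f k ((f ^ j) a) ((f ^ j) b) = Dk f (k + j) a b := by
  simp only [Dk, zpow_add, Equiv.Perm.mul_apply]

theorem Dk_zero (f : Equiv.Perm M) (a b : M) : Dk f 0 a b = dist a b := by simp [Dk]

theorem symm_pow_eq (f : Equiv.Perm M) (n : ℕ) : f.symm ^ n = f ^ (-(n : ℤ)) := by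
  rw [zpow_neg, zpow_natCast, ← inv_pow]; rfl

theorem mem_Wu (f : Equiv.Perm M) (e : ℝ) (x y : M) :
    y ∈ Wu f e x ↔ ∀ n : ℕ, Dk f (-(n : ℤ)) x y ≤ e := by
  simp only [Wu, Set.mem_ofPred_eq, symm_pow_eq, Dk]

theorem mem_Ws (f : Equiv.Perm M) (e : ℝ) (x y : M) :
    y ∈ Ws f e x ↔ ∀ n : ℕ, Dk f (n : ℤ) x y ≤ e := by
  simp only [Ws, Set.mem_ofPred_eq, zpow_natCast, Dk]

theorem Dk_max (f : Equiv.Perm M) {ξ lam : ℝ} (hss : ∀ p q : M, dist p q ≤ ξ →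
      max (dist (f p) (f q)) (dist (f.symm p) (f.symm q)) = lam * dist p q)
    (k : ℤ) (a b : M) (h : Dk f k a b ≤ ξ) :
    max (Dk f (k + 1) a b) (Dk f (k - 1) a b) = lam * Dk f k a b := by
  have h1 := hss _ _ h
  have e1 : ∀ c, (f ^ (k + 1)) c = f ((f ^ k) c) := by
    intro c; rw [add_comm, zpow_add, zpow_one]; rfl
  have e2 : ∀ c, (f ^ (k - 1)) c = f.symm ((f ^ k) c) := by
    intro c; rw [sub_eq_add_neg, add_comm, zpow_add, zpow_neg, zpow_one]; rfl
  simp only [Dk, e1, e2]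
  exact h1

/-- contraction on local unstable sets -/
theorem Dk_contract (f : Equiv.Perm M) {ξ lam : ℝ} (hlam : 1 < lam)
    (hss : ∀ p q : M, dist p q ≤ ξ →
      max (dist (f p) (f q)) (dist (f.symm p) (f.symm q)) = lam * dist p q)
    (a b : M) (K : ℤ) (h : ∀ k ≤ K, Dk f k a b ≤ ξ) (m : ℕ) :
    lam ^ m * Dk f (K - m) a b ≤ Dk f K a b := by
  have := aux_seq' (fun j : ℕ => Dk f (K - j) a b) ξ lam hlam (fun j => Dk_nonneg _ _ _ _)
    (fun j => h _ (by omega)) (fun j => by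
      have := Dk_max f hss (K - (j + 1 : ℕ)) a b (h _ (by omega))
      rw [← this]
      congr 2 <;> push_cast <;> ring) m
  simpa using this

/-- growth bound -/
theorem Dk_grow (f : Equiv.Perm M) {ξ lam : ℝ} (hlam : 1 < lam)
    (hss : ∀ p q : M, dist p q ≤ ξ →
      max (dist (f p) (f q)) (dist (f.symm p) (f.symm q)) = lam * dist p q)
    (a b : M) (c : ℝ) (hc : c ≤ ξ) (n : ℕ) (h : lam ^ n * dist a b ≤ c) (k : ℤ)
    (hk : |k| ≤ n) : Dk f k a b ≤ c := by
  have key : ∀ j : ℕ, j ≤ n → Dk f j a b ≤ lam ^ j * dist a b ∧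
      Dk f (-(j : ℤ)) a b ≤ lam ^ j * dist a b := by
    intro j
    induction j with
    | zero => intro _; simp [Dk_zero]
    | succ j ih =>
      intro hj
      obtain ⟨i1, i2⟩ := ih (by omega)
      have hle : lam ^ j * dist a b ≤ ξ := by
        refine le_trans ?_ (h.trans hc)
        gcongr
        · exact hlam.le
        · omega
      have m1 := Dk_max f hss _ a b (i1.trans hle)
      have m2 := Dk_max f hss _ a b (i2.trans hle)
      have l1 : Dk f ((j : ℤ) + 1) a b ≤ lam * Dk f j a b := m1 ▸ le_max_left _ _
      have l2 : Dk f (-(j : ℤ) - 1) a b ≤ lam * Dk f (-(j : ℤ)) a b := m2 ▸ le_max_right _ _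
      have hl : 0 < lam := by linarith
      refine ⟨?_, ?_⟩
      · push_cast
        refine l1.trans ?_
        rw [pow_succ']
        rw [mul_assoc]
        gcongr
      · have : (-((j + 1 : ℕ) : ℤ)) = -(j : ℤ) - 1 := by push_cast; ring
        rw [this]
        refine l2.trans ?_
        rw [pow_succ']
        rw [mul_assoc]
        gcongr
  have hb : ∀ j : ℕ, j ≤ n → lam ^ j * dist a b ≤ c := by
    intro j hj
    refine le_trans ?_ h
    gcongr
    exact hlam.le
  have hn : k.natAbs ≤ n := by rw [abs_le] at hk; omega
  rcases Int.natAbs_eq k with e | e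
  · rw [e]; exact (key _ hn).1.trans (hb _ hn)
  · rw [e]; exact (key _ hn).2.trans (hb _ hn)

variable [CompactSpace M]

theorem Dk_le_diam (f : Equiv.Perm M) (k : ℤ) (a b : M) :
    Dk f k a b ≤ Metric.diam (Set.univ : Set M) :=
  Metric.dist_le_diam_of_mem isCompact_univ.isBounded (Set.mem_univ _) (Set.mem_univ _)

theorem dFn_le (f : Equiv.Perm M) (n : ℕ) (a b : M) (c : ℝ)
    (h : ∀ k : ℤ, |k| ≤ n → Dk f k a b ≤ c) : dFn f n a b ≤ c := by
  apply csSup_le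
  · exact ⟨_, 0, by simp, rfl⟩
  · rintro r ⟨k, hk, rfl⟩; exact h k hk

theorem le_dFn (f : Equiv.Perm M) (n : ℕ) (a b : M) (k : ℤ) (hk : |k| ≤ n) :
    Dk f k a b ≤ dFn f n a b := by
  apply le_csSup
  · refine ⟨Metric.diam (Set.univ : Set M), ?_⟩
    rintro r ⟨k, hk, rfl⟩; exact Dk_le_diam f k a b
  · exact ⟨k, hk, rfl⟩

theorem rdiam_le (f : Equiv.Perm M) (n : ℕ) (A : Set M) (c : ℝ) (hc : 0 ≤ c)
    (h : ∀ a ∈ A, ∀ b ∈ A, ∀ k : ℤ, |k| ≤ n → Dk f k a b ≤ c) : rdiam (dFn f n) A ≤ c := by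
  apply Real.sSup_le _ hc
  rintro r ⟨a, ha, b, hb, rfl⟩
  exact dFn_le f n a b c (h a ha b hb)

theorem le_rdiam (f : Equiv.Perm M) (n : ℕ) (A : Set M) (a b : M) (ha : a ∈ A) (hb : b ∈ A)
    (k : ℤ) (hk : |k| ≤ n) : Dk f k a b ≤ rdiam (dFn f n) A := by
  refine (le_dFn f n a b k hk).trans ?_
  apply le_csSup
  · refine ⟨Metric.diam (Set.univ : Set M), ?_⟩
    rintro r ⟨a, _, b, _, rfl⟩
    exact dFn_le _ _ _ _ _ fun k _ => Dk_le_diam f k a b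
  · exact ⟨a, ha, b, hb, rfl⟩

theorem covN_le {ι P : Type*} [Fintype ι] (X : Set P) (ρ : P → P → ℝ) (ε : ℝ) (U : ι → Set P)
    (h1 : X ⊆ ⋃ i, U i) (h2 : ∀ i, rdiam ρ (U i) < ε) : covN X ρ ε ≤ Fintype.card ι := by
  apply Nat.sInf_le
  refine ⟨fun i => U ((Fintype.equivFin ι).symm i), ?_, fun i => h2 _⟩
  intro x hx
  obtain ⟨i, hi⟩ := Set.mem_iUnion.mp (h1 hx)
  exact Set.mem_iUnion.mpr ⟨Fintype.equivFin ι i, by simpa using hi⟩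

theorem covN_spec (f : Equiv.Perm M) {ξ lam : ℝ} (hξ : 0 < ξ) (hlam : 1 < lam)
    (hss : ∀ p q : M, dist p q ≤ ξ →
      max (dist (f p) (f q)) (dist (f.symm p) (f.symm q)) = lam * dist p q)
    (X : Set M) (n : ℕ) :
    ∃ U : Fin (covN X (dFn f n) ξ) → Set M, X ⊆ (⋃ i, U i) ∧
      ∀ i, rdiam (dFn f n) (U i) < ξ := by
  have hp : 0 < lam ^ n := by positivity
  have hne : {m : ℕ | ∃ U : Fin m → Set M, X ⊆ (⋃ i, U i) ∧
      ∀ i, rdiam (dFn f n) (U i) < ξ}.Nonempty := by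
    obtain ⟨t, -, htf, ht⟩ := Metric.finite_approx_of_totallyBounded
      (isCompact_univ (X := M)).totallyBounded (ξ / 4 / lam ^ n) (by positivity)
    have : Fintype t := htf.fintype
    refine ⟨Fintype.card t, fun i => Metric.ball (((Fintype.equivFin t).symm i : t) : M)
      (ξ / 4 / lam ^ n), ?_, ?_⟩
    · intro x _
      have := ht (Set.mem_univ x)
      simp only [Set.mem_iUnion] at this
      obtain ⟨y, hy, hxy⟩ := this
      exact Set.mem_iUnion.mpr ⟨Fintype.equivFin t ⟨y, hy⟩, by simpa using hxy⟩
    · intro i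
      refine lt_of_le_of_lt (rdiam_le f n _ (ξ / 2) (by positivity) ?_) (by linarith)
      intro a ha b hb k hk
      refine Dk_grow f hlam hss a b (ξ / 2) (by linarith) n ?_ k hk
      rw [Metric.mem_ball] at ha hb
      have := dist_triangle_right a b (((Fintype.equivFin t).symm i : t) : M)
      have h3 : dist a b ≤ ξ / 4 / lam ^ n + ξ / 4 / lam ^ n := by linarith
      calc lam ^ n * dist a b ≤ lam ^ n * (ξ / 4 / lam ^ n + ξ / 4 / lam ^ n) := by gcongr
        _ = ξ / 2 := by field_simp; norm_num
  exact Nat.sInf_mem hne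

theorem covN_pos (f : Equiv.Perm M) {ξ lam : ℝ} (hξ : 0 < ξ) (hlam : 1 < lam)
    (hss : ∀ p q : M, dist p q ≤ ξ →
      max (dist (f p) (f q)) (dist (f.symm p) (f.symm q)) = lam * dist p q)
    (X : Set M) (x : M) (hx : x ∈ X) (n : ℕ) : 0 < covN X (dFn f n) ξ := by
  obtain ⟨U, h1, -⟩ := covN_spec f hξ hlam hss X n
  obtain ⟨i, -⟩ := Set.mem_iUnion.mp (h1 hx)
  exact i.pos

/-- cover of a small unstable plaque from a cover of the unstable set of `x` -/
theorem plaque (f : Equiv.Perm M) {ξ lam : ℝ} (hξ : 0 < ξ) (hlam : 1 < lam)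
    (hss : ∀ p q : M, dist p q ≤ ξ →
      max (dist (f p) (f q)) (dist (f.symm p) (f.symm q)) = lam * dist p q)
    (hcc : ∀ ε > (0 : ℝ), ∃ δ > (0 : ℝ), ∀ x y : M, dist x y < δ → (Ws f ε x ∩ Wu f ε y).Nonempty)
    (htr : ∀ U V : Set M, IsOpen U → IsOpen V → U.Nonempty → V.Nonempty →
      ∃ N : ℕ, ∃ w ∈ U, (f ^ N) w ∈ V) (x : M) :
    ∃ δ > 0, δ ≤ ξ ∧ ∀ z : M, ∃ L : ℕ, ∀ L' ≥ L, ∀ n : ℕ,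
      ∃ V : Fin (covN (Wu f ξ x) (dFn f (n + L')) ξ) → Set M, Wu f δ z ⊆ (⋃ i, V i) ∧
        ∀ i, rdiam (dFn f n) (V i) < ξ := by
  obtain ⟨m, hm⟩ := pow_unbounded_of_one_lt 4 hlam
  obtain ⟨δ₀, hδ₀, hol⟩ := hcc (ξ / 8) (by positivity)
  obtain ⟨δ₁, hδ₁, hol₁⟩ := hcc (min (ξ / 8) (δ₀ / 4)) (by positivity)
  refine ⟨min (ξ / 8) (δ₀ / 4), by positivity,
    (min_le_left _ _).trans (by linarith), fun z => ?_⟩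
  obtain ⟨N, w, hw, hwz⟩ := htr (Metric.ball x δ₁) (Metric.ball z (δ₀ / 4)) Metric.isOpen_ball
    Metric.isOpen_ball ⟨x, Metric.mem_ball_self hδ₁⟩ ⟨z, Metric.mem_ball_self (by positivity)⟩
  obtain ⟨w', hs, hu⟩ := hol₁ w x hw
  rw [mem_Ws] at hs
  rw [mem_Wu] at hu
  have hpz : dist ((f ^ N) w') z < δ₀ / 2 := by
    have h1 := hs N
    simp only [Dk, zpow_natCast] at h1
    rw [Metric.mem_ball] at hwz
    have h2 := min_le_right (ξ / 8) (δ₀ / 4)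
    have h3 := dist_triangle_left ((f ^ N) w') z ((f ^ N) w)
    linarith
  refine ⟨m + N, fun L hL n => ?_⟩
  obtain ⟨U, hU1, hU2⟩ := covN_spec f hξ hlam hss (Wu f ξ x) (n + L)
  -- holonomy
  have hol2 : ∀ q : M, ∃ h : M, q ∈ Wu f (min (ξ / 8) (δ₀ / 4)) z →
      h ∈ Ws f (ξ / 8) q ∩ Wu f (ξ / 8) ((f ^ N) w') := by
    intro q
    by_cases hq : q ∈ Wu f (min (ξ / 8) (δ₀ / 4)) z
    · have hq' := (mem_Wu _ _ _ _).mp hq 0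
      simp only [Nat.cast_zero, neg_zero, Dk_zero] at hq'
      have h2 := min_le_right (ξ / 8) (δ₀ / 4)
      have h3 := dist_triangle_right q ((f ^ N) w') z
      rw [dist_comm z q] at hq'
      obtain ⟨h, hh⟩ := hol q ((f ^ N) w') (by linarith)
      exact ⟨h, fun _ => hh⟩
    · exact ⟨q, fun h => absurd h hq⟩
  choose h hh using hol2
  refine ⟨fun i => {q | q ∈ Wu f (min (ξ / 8) (δ₀ / 4)) z ∧ (f ^ (-(N : ℤ))) (h q) ∈ U i},
    ?_, ?_⟩
  · intro q hq
    have hmem : (f ^ (-(N : ℤ))) (h q) ∈ Wu f ξ x := by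
      rw [mem_Wu]
      intro k
      have h1 := hu k
      have h2 := (mem_Wu _ _ _ _).mp (hh q hq).2 (k)
      have h3 := Dk_tri f (-(k : ℤ)) x w' ((f ^ (-(N : ℤ))) (h q))
      have h2' := (mem_Wu _ _ _ _).mp (hh q hq).2 (k + N)
      have e : Dk f (-((k + N : ℕ) : ℤ)) ((f ^ N) w') (h q) =
          Dk f (-(k : ℤ)) w' ((f ^ (-(N : ℤ))) (h q)) := by
        have := Dk_shift f (-(k : ℤ)) (-(N : ℤ)) ((f ^ N) w') (h q)
        rw [zpow_neg, zpow_natCast, ← Equiv.Perm.mul_apply, inv_mul_cancel, Equiv.Perm.one_apply] at this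
        rw [zpow_neg, zpow_natCast, this]
        congr 1
        push_cast; ring
      rw [e] at h2'
      have h4 := min_le_left (ξ / 8) (δ₀ / 4)
      linarith
    obtain ⟨i, hi⟩ := Set.mem_iUnion.mp (hU1 hmem)
    exact Set.mem_iUnion.mpr ⟨i, hq, hi⟩
  · intro i
    refine lt_of_le_of_lt (rdiam_le f n _ (ξ / 2) (by positivity) ?_) (by linarith)
    rintro a ⟨ha, hai⟩ b ⟨hb, hbi⟩ k hk
    have h4 := min_le_left (ξ / 8) (δ₀ / 4)
    rcases le_or_gt k 0 with hk0 | hk0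
    · have ha1 := (mem_Wu _ _ _ _).mp ha k.natAbs
      have hb1 := (mem_Wu _ _ _ _).mp hb k.natAbs
      have e : -(k.natAbs : ℤ) = k := by omega
      rw [e] at ha1 hb1
      have h3 := Dk_tri f k a z b
      rw [Dk_comm f k a z] at h3
      linarith
    · have ha1 := (mem_Ws _ _ _ _).mp (hh a ha).1 k.natAbs
      have hb1 := (mem_Ws _ _ _ _).mp (hh b hb).1 k.natAbs
      have e : (k.natAbs : ℤ) = k := by omega
      rw [e] at ha1 hb1
      have hall : ∀ j ≤ k + m, Dk f j (h a) (h b) ≤ ξ := by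
        intro j hj
        rcases le_or_gt j 0 with hj0 | hj0
        · have ha2 := (mem_Wu _ _ _ _).mp (hh a ha).2 j.natAbs
          have hb2 := (mem_Wu _ _ _ _).mp (hh b hb).2 j.natAbs
          have e : -(j.natAbs : ℤ) = j := by omega
          rw [e] at ha2 hb2
          have h3 := Dk_tri f j (h a) ((f ^ N) w') (h b)
          rw [Dk_comm f j (h a) ((f ^ N) w')] at h3
          linarith
        · have h5 := le_rdiam f (n + L) (U i) _ _ hai hbi (j + N) (by
            rw [abs_le] at hk ⊢; push_cast; omega)
          rw [Dk_shift] at h5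
          have e : j + (N : ℤ) + -(N : ℤ) = j := by ring
          rw [e] at h5
          exact h5.trans (hU2 i).le
      have h5 := Dk_contract f hlam hss _ _ _ hall m
      have h6 := hall (k + m) le_rfl
      have e : k + (m : ℤ) - m = k := by ring
      rw [e] at h5
      have h7 := Dk_nonneg f k (h a) (h b)
      have h8 : Dk f k (h a) (h b) ≤ ξ / 4 := by nlinarith
      have h9 := Dk_tri f k a (h a) b
      have h10 := Dk_tri f k (h a) (h b) b
      rw [Dk_comm f k (h b) b] at h10
      linarith

theorem covN_compare (f : Equiv.Perm M) {ξ lam : ℝ} (hξ : 0 < ξ) (hlam : 1 < lam)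
    (hss : ∀ p q : M, dist p q ≤ ξ →
      max (dist (f p) (f q)) (dist (f.symm p) (f.symm q)) = lam * dist p q)
    (hcc : ∀ ε > (0 : ℝ), ∃ δ > (0 : ℝ), ∀ x y : M, dist x y < δ → (Ws f ε x ∩ Wu f ε y).Nonempty)
    (htr : ∀ U V : Set M, IsOpen U → IsOpen V → U.Nonempty → V.Nonempty →
      ∃ N : ℕ, ∃ w ∈ U, (f ^ N) w ∈ V) (x y : M) :
    ∃ C L : ℕ, ∀ n, covN (Wu f ξ y) (dFn f n) ξ ≤ C * covN (Wu f ξ x) (dFn f (n + L)) ξ := by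
  obtain ⟨δ, hδ, hδξ, hpl⟩ := plaque f hξ hlam hss hcc htr x
  choose L hL using hpl
  obtain ⟨K, hK⟩ := pow_unbounded_of_one_lt (2 * ξ / δ) hlam
  have hKp : 0 < lam ^ K := by positivity
  rw [div_lt_iff₀ hδ] at hK
  have htb : TotallyBounded (Wu f ξ y) :=
    (isCompact_univ (X := M)).totallyBounded.subset (Set.subset_univ _)
  obtain ⟨t, hty, htf, ht⟩ := Metric.finite_approx_of_totallyBounded htb
    (δ / lam ^ K) (by positivity)
  have : Fintype t := htf.fintype
  refine ⟨Fintype.card t, ∑ z : t, L z, fun n => ?_⟩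
  have hLz : ∀ z : t, ∑ z : t, L z ≥ L z := fun z =>
    Finset.single_le_sum (f := fun z : t => L z) (fun _ _ => Nat.zero_le _) (Finset.mem_univ z)
  have hV := fun z : t => hL z _ (hLz z) n
  choose V hV1 hV2 using hV
  have := covN_le (ι := t × Fin (covN (Wu f ξ x) (dFn f (n + ∑ z : t, L z)) ξ))
    (Wu f ξ y) (dFn f n) ξ (fun p => V p.1 p.2) ?_ (fun p => hV2 _ _)
  · simpa using this
  · intro q hq
    have hq2 := ht hq
    simp only [Set.mem_iUnion] at hq2
    obtain ⟨z, hz, hqz⟩ := hq2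
    have hmem : q ∈ Wu f δ z := by
      rw [mem_Wu]
      intro k
      have hyz := (mem_Wu _ _ _ _).mp (hty hz)
      have hyq := (mem_Wu _ _ _ _).mp hq
      rcases le_or_gt k K with hk | hk
      · refine Dk_grow f hlam hss z q δ hδξ K ?_ _ (by rw [abs_neg]; simpa using hk)
        rw [Metric.mem_ball, dist_comm, lt_div_iff₀ hKp] at hqz
        linarith
      · have con : ∀ v : M, (∀ n : ℕ, Dk f (-(n : ℤ)) y v ≤ ξ) →
            lam ^ k * Dk f (-(k : ℤ)) y v ≤ ξ := by
          intro v hv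
          have h1 := Dk_contract f hlam hss y v 0 (fun j hj => by
            have := hv j.natAbs
            have e : -(j.natAbs : ℤ) = j := by omega
            rwa [e] at this) k
          have h2 := hv 0
          simp only [Nat.cast_zero, neg_zero] at h2
          rw [zero_sub] at h1
          linarith
        have c1 := con z hyz
        have c2 := con q hyq
        have h3 := Dk_tri f (-(k : ℤ)) z y q
        rw [Dk_comm f _ z y] at h3
        have hkK : lam ^ K ≤ lam ^ k := pow_le_pow_right₀ hlam.le hk.le
        have hkp : 0 < lam ^ k := by positivity
        by_contra hc
        push Not at hc
        nlinarith
    obtain ⟨i, hi⟩ := Set.mem_iUnion.mp (hV1 ⟨z, hz⟩ hmem)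
    exact Set.mem_iUnion.mpr ⟨(⟨z, hz⟩, i), hi⟩

end Aux

theorem tendsto_shift_aux (a : ℕ → ℝ) (E : ℝ) (L : ℕ)
    (ha : Tendsto (fun n : ℕ => a n / n) atTop (𝓝 E)) :
    Tendsto (fun n : ℕ => a (n + L) / n) atTop (𝓝 E) := by
  have h1 : Tendsto (fun n : ℕ => a (n + L) / ((n + L : ℕ) : ℝ)) atTop (𝓝 E) :=
    ha.comp (tendsto_add_atTop_nat L)
  have h2 : Tendsto (fun n : ℕ => 1 + (L : ℝ) / (n : ℝ)) atTop (𝓝 (1 + 0)) :=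
    tendsto_const_nhds.add (tendsto_const_div_atTop_nhds_zero_nat _)
  have h3 := h1.mul h2
  rw [add_zero, mul_one] at h3
  refine h3.congr' ?_
  filter_upwards [eventually_gt_atTop 0] with n hn
  have : (0 : ℝ) < n := by exact_mod_cast hn
  push_cast
  field_simp

theorem tendsto_aux (a b : ℕ → ℝ) (E C C' : ℝ) (L L' : ℕ)
    (h : ∀ n, b n ≤ C + a (n + L)) (h' : ∀ n, a n ≤ C' + b (n + L'))
    (ha : Tendsto (fun n : ℕ => a n / n) atTop (𝓝 E)) :
    Tendsto (fun n : ℕ => b n / n) atTop (𝓝 E) := by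
  have up : Tendsto (fun n : ℕ => C / n + a (n + L) / n) atTop (𝓝 (0 + E)) :=
    (tendsto_const_div_atTop_nhds_zero_nat C).add (tendsto_shift_aux a E L ha)
  rw [zero_add] at up
  -- lower bound, shifted
  have ha' : Tendsto (fun n : ℕ => a (n - L') / n) atTop (𝓝 E) := by
    rw [← tendsto_add_atTop_iff_nat L']
    simp only [Nat.add_sub_cancel]
    have h2 : Tendsto (fun n : ℕ => 1 - (L' : ℝ) / ((n + L' : ℕ) : ℝ)) atTop (𝓝 (1 - 0)) :=
      tendsto_const_nhds.sub ((tendsto_const_div_atTop_nhds_zero_nat (L' : ℝ)).comp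
        (tendsto_add_atTop_nat L'))
    have h3 := ha.mul h2
    rw [sub_zero, mul_one] at h3
    refine h3.congr' ?_
    filter_upwards [eventually_gt_atTop 0] with n hn
    have : (0 : ℝ) < n := by exact_mod_cast hn
    push_cast
    field_simp
    ring
  have low : Tendsto (fun n : ℕ => a (n - L') / n - C' / n) atTop (𝓝 (E - 0)) :=
    ha'.sub (tendsto_const_div_atTop_nhds_zero_nat C')
  rw [sub_zero] at low
  refine tendsto_of_tendsto_of_tendsto_of_le_of_le' low up ?_ ?_
  · filter_upwards [eventually_ge_atTop L'] with n hn
    rw [← sub_div]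
    gcongr
    have := h' (n - L')
    rw [Nat.sub_add_cancel hn] at this
    linarith
  · filter_upwards with n
    rw [← add_div]
    gcongr
    exact h n

theorem unstable_case {M : Type*} [MetricSpace M] [CompactSpace M]
    (f : Equiv.Perm M) {ξ lam : ℝ} (hξ : 0 < ξ) (hlam : 1 < lam)
    (hss : ∀ p q : M, dist p q ≤ ξ →
      max (dist (f p) (f q)) (dist (f.symm p) (f.symm q)) = lam * dist p q)
    (hcc : ∀ ε > (0 : ℝ), ∃ δ > (0 : ℝ), ∀ x y : M, dist x y < δ → (Ws f ε x ∩ Wu f ε y).Nonempty)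
    (htr : ∀ U V : Set M, IsOpen U → IsOpen V → U.Nonempty → V.Nonempty →
      ∃ N : ℕ, ∃ w ∈ U, (f ^ N) w ∈ V) (x y : M) (E : ℝ)
    (hE : Tendsto (fun n : ℕ =>
          Real.log ((covN (Wu f ξ x) (dFn f n) ξ : ℕ) : ℝ) / (n : ℝ)) atTop (𝓝 E)) :
    Tendsto (fun n : ℕ =>
          Real.log ((covN (Wu f ξ y) (dFn f n) ξ : ℕ) : ℝ) / (n : ℝ)) atTop (𝓝 E) := by
  have main : ∀ x y : M, ∃ (C : ℝ) (L : ℕ), ∀ n,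
      Real.log ((covN (Wu f ξ y) (dFn f n) ξ : ℕ) : ℝ) ≤
        C + Real.log ((covN (Wu f ξ x) (dFn f (n + L)) ξ : ℕ) : ℝ) := by
    intro x y
    obtain ⟨C, L, hC⟩ := covN_compare f hξ hlam hss hcc htr x y
    refine ⟨Real.log C, L, fun n => ?_⟩
    have hself : ∀ v : M, v ∈ Wu f ξ v := fun v => by
      rw [mem_Wu]; intro n; simp [Dk, hξ.le]
    have p1 := covN_pos f hξ hlam hss _ y (hself y) n
    have p2 := covN_pos f hξ hlam hss _ x (hself x) (n + L)
    have p3 : 0 < C := by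
      have := hC n
      by_contra hc
      have : C = 0 := by omega
      subst this
      simp at this
      omega
    rw [← Real.log_mul (by positivity) (by positivity)]
    apply Real.log_le_log (by exact_mod_cast p1)
    exact_mod_cast hC n
  obtain ⟨C, L, h⟩ := main x y
  obtain ⟨C', L', h'⟩ := main y x
  exact tendsto_aux _ _ E C C' L L' h h' hE

theorem dFn_symm {M : Type*} [MetricSpace M] (f : Equiv.Perm M) (n : ℕ) :
    dFn f.symm n = dFn f n := by
  have e : ∀ k : ℤ, f.symm ^ k = f ^ (-k) := by
    intro k; rw [zpow_neg, ← inv_zpow]; rfl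
  funext a b
  unfold dFn
  congr 1
  ext r
  simp only [Set.mem_ofPred_eq, e]
  constructor
  · rintro ⟨k, hk, h⟩; exact ⟨-k, by rwa [abs_neg], h⟩
  · rintro ⟨k, hk, h⟩; exact ⟨-k, by rwa [abs_neg], by rwa [neg_neg]⟩

theorem stmt_16 {M : Type*} [MetricSpace M] [CompactSpace M]
    (f : Equiv.Perm M) (hf : Continuous f) (hf' : Continuous f.symm)
    (ξ lam : ℝ) (hξ : 0 < ξ) (hlam : 1 < lam)
    (hexp : ∀ x y : M, x ≠ y → ∃ n : ℤ, 3 * ξ < dist ((f ^ n) x) ((f ^ n) y))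
    (hss : ∀ p q : M, dist p q ≤ ξ →
      max (dist (f p) (f q)) (dist (f.symm p) (f.symm q)) = lam * dist p q)
    (hcc : ∀ ε > (0 : ℝ), ∃ δ > (0 : ℝ), ∀ x y : M, dist x y < δ → (Ws f ε x ∩ Wu f ε y).Nonempty)
    (htrans : ∃ x₀ : M, Dense (Set.range fun n : ℕ => (f ^ n) x₀)) :
    ∀ x y : M,
      (∀ E : ℝ,
        Tendsto (fun n : ℕ =>
          Real.log ((covN (Wu f ξ x) (dFn f n) ξ : ℕ) : ℝ) / (n : ℝ)) atTop (𝓝 E) ↔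
        Tendsto (fun n : ℕ =>
          Real.log ((covN (Wu f ξ y) (dFn f n) ξ : ℕ) : ℝ) / (n : ℝ)) atTop (𝓝 E)) ∧
      (∀ E : ℝ,
        Tendsto (fun n : ℕ =>
          Real.log ((covN (Ws f ξ x) (dFn f n) ξ : ℕ) : ℝ) / (n : ℝ)) atTop (𝓝 E) ↔
        Tendsto (fun n : ℕ =>
          Real.log ((covN (Ws f ξ y) (dFn f n) ξ : ℕ) : ℝ) / (n : ℝ)) atTop (𝓝 E)) := by
  have htr : ∀ U V : Set M, IsOpen U → IsOpen V → U.Nonempty → V.Nonempty →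
      ∃ N : ℕ, ∃ w ∈ U, (f ^ N) w ∈ V := by
    obtain ⟨x₀, hx₀⟩ := htrans
    intro U V hU hV hUn hVn
    obtain ⟨_, ⟨a, rfl⟩, hu⟩ := hx₀.exists_mem_open hU hUn
    have hc : Continuous (f ^ a : Equiv.Perm M) := by
      rw [Equiv.Perm.coe_pow]; exact hf.iterate a
    have hne : ((f ^ a : Equiv.Perm M) ⁻¹' V).Nonempty := by
      obtain ⟨v, hv⟩ := hVn
      exact ⟨(f ^ a).symm v, by simpa using hv⟩
    obtain ⟨_, ⟨n, rfl⟩, hn⟩ := hx₀.exists_mem_open (hV.preimage hc) hne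
    refine ⟨n, _, hu, ?_⟩
    have e : (f ^ n) ((f ^ a) x₀) = (f ^ a) ((f ^ n) x₀) := by
      rw [← Equiv.Perm.mul_apply, ← Equiv.Perm.mul_apply, ← pow_add, ← pow_add, add_comm]
    show (f ^ n) ((f ^ a) x₀) ∈ V
    rw [e]
    exact hn
  have htr' : ∀ U V : Set M, IsOpen U → IsOpen V → U.Nonempty → V.Nonempty →
      ∃ N : ℕ, ∃ w ∈ U, (f.symm ^ N) w ∈ V := by
    intro U V hU hV hUn hVn
    obtain ⟨N, w, hw, hN⟩ := htr V U hV hU hVn hUn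
    refine ⟨N, _, hN, ?_⟩
    rw [symm_pow_eq, zpow_neg, zpow_natCast, ← Equiv.Perm.mul_apply, inv_mul_cancel, Equiv.Perm.one_apply]
    exact hw
  have hss' : ∀ p q : M, dist p q ≤ ξ →
      max (dist (f.symm p) (f.symm q)) (dist (f.symm.symm p) (f.symm.symm q)) =
        lam * dist p q := by
    intro p q h
    rw [max_comm]
    exact hss p q h
  have hcc' : ∀ ε > (0 : ℝ), ∃ δ > (0 : ℝ), ∀ x y : M, dist x y < δ →
      (Ws f.symm ε x ∩ Wu f.symm ε y).Nonempty := by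
    intro ε hε
    obtain ⟨δ, hδ, h⟩ := hcc ε hε
    refine ⟨δ, hδ, fun x y hxy => ?_⟩
    obtain ⟨v, h1, h2⟩ := h y x (by rwa [dist_comm])
    exact ⟨v, h2, h1⟩
  have hs := fun x y E => unstable_case f.symm hξ hlam hss' hcc' htr' x y E
  simp only [dFn_symm] at hs
  intro x y
  refine ⟨fun E => ⟨?_, ?_⟩, fun E => ⟨?_, ?_⟩⟩
  · exact unstable_case f hξ hlam hss hcc htr x y E
  · exact unstable_case f hξ hlam hss hcc htr y x E
  · exact hs x y E
  · exact hs y x E
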